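/- Let G = ∏_{x ∈ 𝒫(ℕ)} (ℤ/2ℤ) be the Cantor cube 2^𝔠 regarded as a compact topological group with the product topology, and let μ be its Haar probability measure. Then there exists a map Φ from the μ-measurable subsets of G to 𝒫(ℕ) such that: (i) for every μ-measurable A ⊆ G, the asymptotic density of Φ(A) exists and d(Φ(A)) = μ(A); (ii) for all μ-measurable A, B ⊆ G, the sets Φ(A ∩ B) Δ (Φ(A) ∩ Φ(B)) and Φ(A ∪ B) Δ (Φ(A) ∪ Φ(B)) and Φ(G∖A) Δ (ℕ∖Φ(A)) all have asymptotic density zero; (iii) if μ(A Δ B) > 0 then Φ(A) Δ Φ(B) has positive upper asymptotic density. Hence Φ induces a measure-preserving embedding of the measure algebra H(2^𝔠)/Δ_H of Haar-measurable sets modulo Haar-null sets into 𝒫(ℕ)/Δ_d. -/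

import Mathlib

open Filter Topology MeasureTheory
open scoped symmDiff

/-- Upper asymptotic density: `d*(A) = limsup |A ∩ {0,…,n−1}|/n`. -/
noncomputable def upperDensity (A : Set ℕ) : ℝ :=
  Filter.limsup (fun n : ℕ => ((A ∩ Set.Iio n).ncard : ℝ) / n) Filter.atTop

/-- `A` has asymptotic density `α`: `lim |A ∩ {0,…,n−1}|/n = α`. -/
def HasDensity (A : Set ℕ) (α : ℝ) : Prop :=
  Filter.Tendsto (fun n : ℕ => ((A ∩ Set.Iio n).ncard : ℝ) / n) Filter.atTop (nhds α)

/-- The Cantor cube `2^𝔠`, realized as the product of `𝔠 = |𝒫(ℕ)|` many copies of the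
two-element group `ℤ/2ℤ`, a compact topological group. -/
abbrev CantorCube : Type := Set ℕ → ZMod 2

noncomputable instance : MeasurableSpace CantorCube := borel _
instance : BorelSpace CantorCube := ⟨rfl⟩

/-!
Pairing the binary digits of `n` with `c : ℕ → ZMod 2` gives the exponent of a Walsh function of
`n`, whose Cesàro means tend to zero unless `c = 0`. Choose linearly independent `c i`, one for each
coordinate `i` of the cube; this is possible because `(ℤ/2ℤ)^ℕ` has dimension `𝔠`. Every
nontrivial character of the cube, evaluated along the sequence `x n` whose `i`-th coordinate pairs
`n` with `c i`, is then a Walsh function with nonzero `c`, so `x` is equidistributed by Weyl's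
criterion. Consequently `C ↦ x ⁻¹' C` is a Boolean homomorphism turning the measure of clopen sets
into density. Clopen sets are dense in the measure algebra, and `𝒫(ℕ)` is complete for the
pseudometric `d*(E ∆ F)`, so this homomorphism extends to all measurable sets.
-/

open ProbabilityTheory

section Density

/-- The uniform probability measure on `{0, …, n - 1}`, and the zero measure for `n = 0`. In
terms of it, `|E ∩ {0, …, n - 1}| / n` is the measure of `E` and a Cesàro mean is an integral. -/
noncomputable abbrev initialMeasure (n : ℕ) : Measure ℕ := uniformOn (Finset.range n)

variable {E F : Set ℕ}

lemma integral_initialMeasure (g : ℕ → ℝ) (n : ℕ) :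
    ∫ m, g m ∂initialMeasure n = (∑ m ∈ Finset.range n, g m) / n := by
  have hg : IntegrableOn g (Finset.range n) .count :=
    (integrable_indicator_iff (Finset.measurableSet _)).1 <| integrable_count_iff.2 <|
      summable_of_ne_finset_zero fun _ hm ↦
        norm_eq_zero.2 (Set.indicator_of_notMem (Finset.mem_coe.not.2 hm) g)
  rw [initialMeasure, uniformOn, ProbabilityTheory.cond, integral_smul_measure,
    setIntegral_finset _ hg, Measure.count_apply_finset]
  simp [div_eq_inv_mul]

lemma initialMeasure_real (E : Set ℕ) (n : ℕ) :
    (initialMeasure n).real E = ((E ∩ Set.Iio n).ncard : ℝ) / n := by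
  classical
  have hE : E ∩ Set.Iio n = {m ∈ Finset.range n | m ∈ E} := by ext; simp [and_comm]
  rw [← integral_indicator_one .of_discrete, integral_initialMeasure, hE, Set.ncard_coe_finset]
  simp [Set.indicator_apply]

lemma hasDensity_iff_tendsto_initialMeasure {α : ℝ} :
    HasDensity E α ↔ Tendsto (fun n ↦ (initialMeasure n).real E) atTop (𝓝 α) := by
  simp only [HasDensity, initialMeasure_real]

lemma upperDensity_eq_limsup_initialMeasure (E : Set ℕ) :
    upperDensity E = limsup (fun n ↦ (initialMeasure n).real E) atTop := by
  simp only [upperDensity, initialMeasure_real]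

lemma HasDensity.upperDensity_eq {α : ℝ} (h : HasDensity E α) : upperDensity E = α :=
  h.limsup_eq

lemma isBoundedUnder_le_initialMeasure (E : Set ℕ) :
    IsBoundedUnder (· ≤ ·) atTop fun n ↦ (initialMeasure n).real E :=
  isBoundedUnder_of ⟨1, fun _ ↦ measureReal_le_one⟩

lemma isBoundedUnder_ge_initialMeasure (E : Set ℕ) :
    IsBoundedUnder (· ≥ ·) atTop fun n ↦ (initialMeasure n).real E :=
  isBoundedUnder_of ⟨0, fun _ ↦ measureReal_nonneg⟩

lemma eventually_initialMeasure_lt_of_upperDensity_lt {δ : ℝ} (h : upperDensity E < δ) :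
    ∀ᶠ n in atTop, (initialMeasure n).real E < δ :=
  eventually_lt_of_limsup_lt (upperDensity_eq_limsup_initialMeasure E ▸ h)
    (isBoundedUnder_le_initialMeasure E)

lemma upperDensity_le_of_initialMeasure_le {δ : ℝ} (h : ∀ n, (initialMeasure n).real E ≤ δ) :
    upperDensity E ≤ δ :=
  upperDensity_eq_limsup_initialMeasure E ▸
    limsup_le_of_le (isBoundedUnder_ge_initialMeasure E).isCoboundedUnder_le (.of_forall h)

lemma upperDensity_mono (h : E ⊆ F) : upperDensity E ≤ upperDensity F := by
  simp only [upperDensity_eq_limsup_initialMeasure]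
  exact limsup_le_limsup (.of_forall fun _ ↦ measureReal_mono h)
    (isBoundedUnder_ge_initialMeasure E).isCoboundedUnder_le (isBoundedUnder_le_initialMeasure F)

lemma upperDensity_nonneg (E : Set ℕ) : 0 ≤ upperDensity E := by
  rw [upperDensity_eq_limsup_initialMeasure]
  exact le_limsup_of_frequently_le (.of_forall fun _ ↦ measureReal_nonneg)
    (isBoundedUnder_le_initialMeasure E)

lemma upperDensity_union_le (E F : Set ℕ) :
    upperDensity (E ∪ F) ≤ upperDensity E + upperDensity F := by
  have hE := isBoundedUnder_le_initialMeasure E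
  have hE' := isBoundedUnder_ge_initialMeasure E
  have hF := isBoundedUnder_le_initialMeasure F
  have hF' := isBoundedUnder_ge_initialMeasure F
  simp only [upperDensity_eq_limsup_initialMeasure]
  calc limsup (fun n ↦ (initialMeasure n).real (E ∪ F)) atTop
      ≤ limsup (fun n ↦ (initialMeasure n).real E + (initialMeasure n).real F) atTop :=
        limsup_le_limsup (.of_forall fun _ ↦ measureReal_union_le E F)
          (isBoundedUnder_ge_initialMeasure _).isCoboundedUnder_le
          (isBoundedUnder_le_add hE hF)
    _ ≤ _ := limsup_add_le hE' hE hF'.isCoboundedUnder_le hF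

lemma hasDensity_zero_of_finite (hE : E.Finite) : HasDensity E 0 := by
  refine squeeze_zero (fun _ ↦ by positivity) (fun n ↦ ?_)
    (tendsto_const_div_atTop_nhds_zero_nat (E.ncard : ℝ))
  gcongr
  exact Set.inter_subset_left

lemma hasDensity_of_approx {α : ℝ} (h : ∀ ε > 0, ∃ F β,
    HasDensity F β ∧ upperDensity (E ∆ F) < ε ∧ |α - β| < ε) : HasDensity E α := by
  rw [hasDensity_iff_tendsto_initialMeasure, Metric.tendsto_nhds]
  intro ε hε
  obtain ⟨F, β, hF, hEF, hαβ⟩ := h (ε / 3) (by positivity)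
  rw [hasDensity_iff_tendsto_initialMeasure, Metric.tendsto_nhds] at hF
  filter_upwards [hF (ε / 3) (by positivity),
    eventually_initialMeasure_lt_of_upperDensity_lt hEF] with n hFβ hEF
  have hEFn : |(initialMeasure n).real E - (initialMeasure n).real F| < ε / 3 :=
    (abs_measureReal_sub_le_measureReal_symmDiff MeasurableSet.of_discrete.nullMeasurableSet
      MeasurableSet.of_discrete.nullMeasurableSet).trans_lt hEF
  rw [Real.dist_eq] at hFβ ⊢
  rw [abs_lt] at *
  constructor <;> linarith

/-- The upper density of the union can exceed the sum of the upper densities; the uniform bound over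
all `n` is what makes countable subadditivity work. -/
lemma upperDensity_iUnion_le_tsum {D : ℕ → Set ℕ} {δ : ℕ → ℝ} (hδ : Summable δ)
    (hD : ∀ k n, (initialMeasure n).real (D k) ≤ δ k) :
    upperDensity (⋃ k, D k) ≤ ∑' k, δ k := by
  have hδ0 (k) : 0 ≤ δ k := measureReal_nonneg.trans (hD k 0)
  refine upperDensity_le_of_initialMeasure_le fun n ↦
    ENNReal.toReal_le_of_le_ofReal (tsum_nonneg hδ0) ?_
  calc initialMeasure n (⋃ k, D k) ≤ ∑' k, initialMeasure n (D k) := measure_iUnion_le D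
    _ ≤ ∑' k, ENNReal.ofReal (δ k) :=
        ENNReal.tsum_le_tsum fun k ↦
          (ENNReal.le_ofReal_iff_toReal_le (measure_ne_top _ _) (hδ0 k)).2 (hD k n)
    _ = ENNReal.ofReal (∑' k, δ k) := (ENNReal.ofReal_tsum_of_nonneg hδ0 hδ).symm

lemma initialMeasure_diff_Iio_le {T : ℕ} {δ : ℝ} (hδ : 0 ≤ δ)
    (h : ∀ n ≥ T, (initialMeasure n).real E ≤ δ) (n : ℕ) :
    (initialMeasure n).real (E \ Set.Iio T) ≤ δ := by
  rcases le_or_gt T n with hn | hn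
  · exact (measureReal_mono Set.sdiff_subset).trans (h n hn)
  · have hempty : (E \ Set.Iio T) ∩ Set.Iio n = ∅ :=
      Set.eq_empty_of_forall_notMem fun m hm ↦ by grind
    simpa [initialMeasure_real, hempty] using hδ

lemma symmDiff_subset_biUnion_Ico {α : Type*} (E : ℕ → Set α) {j k : ℕ} (hjk : j ≤ k) :
    E k ∆ E j ⊆ ⋃ i ∈ Set.Ico j k, E i ∆ E (i + 1) := by
  induction k, hjk using Nat.le_induction with
  | base => simp
  | succ k hjk ih =>
    calc E (k + 1) ∆ E j ⊆ E (k + 1) ∆ E k ∪ E k ∆ E j := symmDiff_triangle ..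
      _ ⊆ _ := Set.union_subset ?_ ?_
    · rw [symmDiff_comm]
      exact Set.subset_biUnion_of_mem (u := fun i ↦ E i ∆ E (i + 1)) (by simp [hjk])
    · exact ih.trans (Set.biUnion_subset_biUnion_left (Set.Ico_subset_Ico_right k.le_succ))

lemma exists_symmDiff_subset_of_strictMono (E : ℕ → Set ℕ) {t : ℕ → ℕ} (ht : StrictMono t) :
    ∃ F : Set ℕ, ∀ j, F ∆ E j ⊆
      Set.Iio (t j) ∪ ⋃ k, (E (k + j) ∆ E (k + j + 1)) \ Set.Iio (t (k + j)) := by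
  classical
  let l (m : ℕ) : ℕ := Nat.findGreatest (t · ≤ m) m
  refine ⟨{m | m ∈ E (l m)}, fun j m hm ↦ ?_⟩
  rcases lt_or_ge m (t j) with hmj | hmj
  · exact .inl hmj
  have hjl : j ≤ l m := Nat.le_findGreatest ((ht.le_apply).trans hmj) hmj
  have htl : t (l m) ≤ m := Nat.findGreatest_spec (P := (t · ≤ m)) ((ht.le_apply).trans hmj) hmj
  obtain ⟨i, ⟨hji, hil⟩, hmi⟩ := Set.mem_iUnion₂.1 (symmDiff_subset_biUnion_Ico E hjl hm)
  obtain ⟨k, rfl⟩ := Nat.exists_eq_add_of_le' hji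
  exact .inr (Set.mem_iUnion.2 ⟨k, hmi, not_lt.2 ((ht.monotone hil.le).trans htl)⟩)

/-- Completeness of `𝒫(ℕ)` in the pseudometric `d*(E ∆ F)`. -/
lemma exists_upperDensity_symmDiff_le_tsum {E : ℕ → Set ℕ} {δ : ℕ → ℝ} (hδ : Summable δ)
    (hE : ∀ k, upperDensity (E k ∆ E (k + 1)) < δ k) :
    ∃ F, ∀ j, upperDensity (F ∆ E j) ≤ ∑' k, δ (k + j) := by
  have hδ0 (k) : 0 ≤ δ k := (upperDensity_nonneg _).trans (hE k).le
  obtain ⟨t, ht, hEt⟩ := extraction_forall_of_eventually fun k ↦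
    eventually_forall_ge_atTop.2 (eventually_initialMeasure_lt_of_upperDensity_lt (hE k))
  obtain ⟨F, hF⟩ := exists_symmDiff_subset_of_strictMono E ht
  refine ⟨F, fun j ↦ ?_⟩
  calc upperDensity (F ∆ E j)
      ≤ upperDensity (Set.Iio (t j)) +
          upperDensity (⋃ k, (E (k + j) ∆ E (k + j + 1)) \ Set.Iio (t (k + j))) :=
        (upperDensity_mono (hF j)).trans (upperDensity_union_le ..)
    _ = upperDensity (⋃ k, (E (k + j) ∆ E (k + j + 1)) \ Set.Iio (t (k + j))) := by
        rw [(hasDensity_zero_of_finite (Set.finite_Iio (t j))).upperDensity_eq, zero_add]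
    _ ≤ ∑' k, δ (k + j) :=
        upperDensity_iUnion_le_tsum ((summable_nat_add_iff j).2 hδ) fun k ↦
          initialMeasure_diff_Iio_le (hδ0 _) fun n hn ↦ (hEt (k + j) n hn).le

end Density

section AlmostPreimage

variable {X : Type*} [MeasurableSpace X] {μ : Measure X} {𝒜 : Set (Set X)} {x : ℕ → X}
  {A B : Set X} {E F : Set ℕ}

/-- `E ⊆ ℕ` is an almost preimage of `A` under the sequence `x` if sets `C ∈ 𝒜` approximate `A` in
measure while their preimages approximate `E` in upper density. It replaces `x ⁻¹' A`, whose density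
need not be the measure of `A` when `A ∉ 𝒜`. -/
def IsAlmostPreimage (μ : Measure X) (𝒜 : Set (Set X)) (x : ℕ → X) (A : Set X) (E : Set ℕ) : Prop :=
  ∀ ε > 0, ∃ C ∈ 𝒜, μ.real (A ∆ C) < ε ∧ upperDensity (E ∆ (x ⁻¹' C)) < ε

lemma inter_symmDiff_inter_subset {α : Type*} (A B C D : Set α) :
    (A ∩ B) ∆ (C ∩ D) ⊆ A ∆ C ∪ B ∆ D := by
  intro y
  simp only [Set.mem_symmDiff, Set.mem_union, Set.mem_inter_iff]
  tauto

namespace IsAlmostPreimage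

lemma compl (h𝒜 : IsSetAlgebra 𝒜) (hA : IsAlmostPreimage μ 𝒜 x A E) :
    IsAlmostPreimage μ 𝒜 x Aᶜ Eᶜ := fun ε hε ↦ by
  obtain ⟨C, hC, hAC, hEC⟩ := hA ε hε
  refine ⟨Cᶜ, h𝒜.compl_mem hC, ?_, ?_⟩
  · rwa [compl_symmDiff_compl]
  · rwa [Set.preimage_compl, compl_symmDiff_compl]

variable [IsFiniteMeasure μ]

lemma inter (h𝒜 : IsSetAlgebra 𝒜) (hA : IsAlmostPreimage μ 𝒜 x A E)
    (hB : IsAlmostPreimage μ 𝒜 x B F) : IsAlmostPreimage μ 𝒜 x (A ∩ B) (E ∩ F) := fun ε hε ↦ by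
  obtain ⟨C, hC, hAC, hEC⟩ := hA (ε / 2) (half_pos hε)
  obtain ⟨D, hD, hBD, hFD⟩ := hB (ε / 2) (half_pos hε)
  refine ⟨C ∩ D, h𝒜.inter_mem hC hD, ?_, ?_⟩
  · calc μ.real ((A ∩ B) ∆ (C ∩ D)) ≤ μ.real (A ∆ C) + μ.real (B ∆ D) :=
          (measureReal_mono (inter_symmDiff_inter_subset ..)).trans (measureReal_union_le ..)
      _ < ε := by linarith
  · calc upperDensity ((E ∩ F) ∆ (x ⁻¹' (C ∩ D)))
        ≤ upperDensity (E ∆ (x ⁻¹' C)) + upperDensity (F ∆ (x ⁻¹' D)) :=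
          (upperDensity_mono (inter_symmDiff_inter_subset ..)).trans (upperDensity_union_le ..)
      _ < ε := by linarith

lemma union (h𝒜 : IsSetAlgebra 𝒜) (hA : IsAlmostPreimage μ 𝒜 x A E)
    (hB : IsAlmostPreimage μ 𝒜 x B F) : IsAlmostPreimage μ 𝒜 x (A ∪ B) (E ∪ F) := by
  simpa only [Set.compl_inter, compl_compl] using
    ((hA.compl h𝒜).inter h𝒜 (hB.compl h𝒜)).compl h𝒜

lemma symmDiff (h𝒜 : IsSetAlgebra 𝒜) (hA : IsAlmostPreimage μ 𝒜 x A E)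
    (hB : IsAlmostPreimage μ 𝒜 x B F) : IsAlmostPreimage μ 𝒜 x (A ∆ B) (E ∆ F) :=
  (hA.inter h𝒜 (hB.compl h𝒜)).union h𝒜 (hB.inter h𝒜 (hA.compl h𝒜))

lemma hasDensity (h𝒜 : ∀ C ∈ 𝒜, NullMeasurableSet C μ)
    (hx : ∀ C ∈ 𝒜, HasDensity (x ⁻¹' C) (μ.real C)) (hA : NullMeasurableSet A μ)
    (hE : IsAlmostPreimage μ 𝒜 x A E) : HasDensity E (μ.real A) := by
  refine hasDensity_of_approx fun ε hε ↦ ?_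
  obtain ⟨C, hC, hAC, hEC⟩ := hE ε hε
  exact ⟨x ⁻¹' C, μ.real C, hx C hC, hEC,
    (abs_measureReal_sub_le_measureReal_symmDiff hA (h𝒜 C hC)).trans_lt hAC⟩

lemma hasDensity_symmDiff (h𝒜 : IsSetAlgebra 𝒜) (h𝒜μ : ∀ C ∈ 𝒜, NullMeasurableSet C μ)
    (hx : ∀ C ∈ 𝒜, HasDensity (x ⁻¹' C) (μ.real C)) (hE : IsAlmostPreimage μ 𝒜 x A E)
    (hF : IsAlmostPreimage μ 𝒜 x A F) : HasDensity (E ∆ F) 0 := by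
  have h := hE.symmDiff h𝒜 hF
  rw [symmDiff_self, Set.bot_eq_empty] at h
  exact measureReal_empty (μ := μ) ▸ h.hasDensity h𝒜μ hx nullMeasurableSet_empty

end IsAlmostPreimage

lemma exists_isAlmostPreimage [IsFiniteMeasure μ] (h𝒜 : IsSetAlgebra 𝒜) (hμ : μ.MeasureDense 𝒜)
    (hx : ∀ C ∈ 𝒜, HasDensity (x ⁻¹' C) (μ.real C)) (hA : NullMeasurableSet A μ) :
    ∃ E, IsAlmostPreimage μ 𝒜 x A E := by
  let δ (k : ℕ) : ℝ := (1 / 2) ^ k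
  have hδ : Summable δ := summable_geometric_two
  have happrox (k : ℕ) : ∃ C ∈ 𝒜, μ.real (A ∆ C) < δ k := by
    obtain ⟨C, hC, hAC⟩ := hμ.completion.approx A hA (measure_ne_top μ A) (δ k) (by positivity)
    exact ⟨C, hC, (ENNReal.lt_ofReal_iff_toReal_lt (measure_ne_top _ _)).1 hAC⟩
  choose C hC hAC using happrox
  have hCC (k : ℕ) : upperDensity ((x ⁻¹' C k) ∆ (x ⁻¹' C (k + 1))) < δ k + δ (k + 1) := by
    have hmem : C k ∆ C (k + 1) ∈ 𝒜 := by
      rw [symmDiff_def]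
      exact h𝒜.union_mem (h𝒜.sdiff_mem (hC _) (hC _)) (h𝒜.sdiff_mem (hC _) (hC _))
    calc upperDensity ((x ⁻¹' C k) ∆ (x ⁻¹' C (k + 1)))
        = μ.real (C k ∆ C (k + 1)) := (hx _ hmem).upperDensity_eq
      _ ≤ μ.real (C k ∆ A) + μ.real (A ∆ C (k + 1)) := measureReal_symmDiff_le ..
      _ < δ k + δ (k + 1) := add_lt_add (symmDiff_comm A _ ▸ hAC k) (hAC (k + 1))
  obtain ⟨E, hE⟩ := exists_upperDensity_symmDiff_le_tsum
    (hδ.add ((summable_nat_add_iff 1).2 hδ)) hCC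
  refine ⟨E, fun ε hε ↦ ?_⟩
  have hδ_lim : Tendsto δ atTop (𝓝 0) := hδ.tendsto_atTop_zero
  have htail := tendsto_sum_nat_add fun k ↦ δ k + δ (k + 1)
  obtain ⟨j, hj, hj'⟩ := ((hδ_lim.eventually_lt_const hε).and
    (htail.eventually_lt_const hε)).exists
  exact ⟨C j, hC j, (hAC j).trans hj, (hE j).trans_lt hj'⟩

end AlmostPreimage

section Clopen

variable {X : Type*} [TopologicalSpace X]

lemma isSetAlgebra_isClopen : IsSetAlgebra {s : Set X | IsClopen s} where
  empty_mem := isClopen_empty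
  compl_mem _ := IsClopen.compl
  union_mem _ _ := IsClopen.union

lemma measureDense_isClopen [CompactSpace X] [T2Space X] [TotallyDisconnectedSpace X]
    [MeasurableSpace X] [BorelSpace X] (μ : Measure X) [IsFiniteMeasure μ] [μ.Regular] :
    μ.MeasureDense {s : Set X | IsClopen s} where
  measurable _ hC := hC.isOpen.measurableSet
  approx A hA _ ε hε := by
    have hε' : ENNReal.ofReal (ε / 2) ≠ 0 := (ENNReal.ofReal_pos.2 (half_pos hε)).ne'
    obtain ⟨U, hU, -, hUA⟩ := hA.exists_isOpen_symmDiff_lt (measure_ne_top μ A) hε'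
    obtain ⟨K, hKU, -, hK, hUK⟩ :=
      hU.measurableSet.exists_isCompact_isClosed_sdiff_lt (measure_ne_top μ U) hε'
    obtain ⟨C, hC, hKC, hCU⟩ := exists_clopen_of_closed_subset_open hK hU hKU
    refine ⟨C, hC, ?_⟩
    calc μ (A ∆ C) ≤ μ (A ∆ U) + μ (U ∆ C) := measure_symmDiff_le A U C
      _ ≤ μ (U ∆ A) + μ (U \ K) := by
        rw [symmDiff_comm, symmDiff_of_ge hCU]
        gcongr
      _ < ENNReal.ofReal (ε / 2) + ENNReal.ofReal (ε / 2) := ENNReal.add_lt_add hUA hUK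
      _ = ENNReal.ofReal ε := by
        rw [← ENNReal.ofReal_add (half_pos hε).le (half_pos hε).le, add_halves]

end Clopen

section Equidistribution

variable {X : Type*} [TopologicalSpace X] [MeasurableSpace X]

/-- The sequence `x` is equidistributed for `μ`: for every continuous `f` the Cesàro means of
`f ∘ x`, encoded as integrals against `initialMeasure`, converge to the integral of `f`. -/
def Equidistributed (μ : Measure X) (x : ℕ → X) : Prop :=
  ∀ f : C(X, ℝ), Tendsto (fun N ↦ ∫ n, f (x n) ∂initialMeasure N) atTop (𝓝 (∫ y, f y ∂μ))

lemma Equidistributed.hasDensity_preimage [OpensMeasurableSpace X] {μ : Measure X} {x : ℕ → X}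
    (hx : Equidistributed μ x) {C : Set X} (hC : IsClopen C) : HasDensity (x ⁻¹' C) (μ.real C) := by
  have h := hx ⟨C.indicator 1, hC.continuous_indicator continuous_one⟩
  have hpre (n : ℕ) : C.indicator (1 : X → ℝ) (x n) = (x ⁻¹' C).indicator 1 n := rfl
  simp only [ContinuousMap.coe_mk, hpre, integral_indicator_one hC.isOpen.measurableSet,
    integral_indicator_one (MeasurableSet.of_discrete (s := x ⁻¹' C))] at h
  exact hasDensity_iff_tendsto_initialMeasure.2 h

variable [CompactSpace X] [OpensMeasurableSpace X]

section

variable {Ω : Type*} [MeasurableSpace Ω] (ν : Measure Ω) {x : Ω → X}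

lemma integrable_continuousMap_comp [IsFiniteMeasure ν] (hx : Measurable x) (f : C(X, ℝ)) :
    Integrable (fun ω ↦ f (x ω)) ν :=
  .of_bound (f.continuous.measurable.comp hx).aestronglyMeasurable ‖f‖
    (.of_forall fun _ ↦ f.norm_coe_le_norm _)

lemma lipschitzWith_one_integral_comp [IsZeroOrProbabilityMeasure ν] (hx : Measurable x) :
    LipschitzWith 1 fun f : C(X, ℝ) ↦ ∫ ω, f (x ω) ∂ν := by
  have hint := integrable_continuousMap_comp ν hx
  refine .of_dist_le_mul fun f g ↦ ?_
  rw [NNReal.coe_one, one_mul, dist_eq_norm, ← integral_sub (hint f) (hint g)]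
  calc ‖∫ ω, f (x ω) - g (x ω) ∂ν‖ ≤ dist f g * ν.real Set.univ :=
        norm_integral_le_of_norm_le_const (.of_forall fun ω ↦
          (dist_eq_norm (f (x ω)) (g (x ω))).ge.trans (ContinuousMap.dist_apply_le_dist _))
    _ ≤ dist f g := mul_le_of_le_one_right dist_nonneg measureReal_le_one

end

/-- Weyl's criterion. -/
lemma equidistributed_of_dense_span {μ : Measure X} [IsProbabilityMeasure μ] {x : ℕ → X}
    {S : Set C(X, ℝ)} (hS : Dense (Submodule.span ℝ S : Set C(X, ℝ)))
    (h : ∀ f ∈ S, Tendsto (fun N ↦ ∫ n, f (x n) ∂initialMeasure N) atTop (𝓝 (∫ y, f y ∂μ))) :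
    Equidistributed μ x := by
  have hμ : ∀ f : C(X, ℝ), Integrable f μ := integrable_continuousMap_comp μ measurable_id
  have hN (N) := integrable_continuousMap_comp (initialMeasure N) (Measurable.of_discrete (f := x))
  have hclosed : IsClosed {f : C(X, ℝ) |
      Tendsto (fun N ↦ ∫ n, f (x n) ∂initialMeasure N) atTop (𝓝 (∫ y, f y ∂μ))} :=
    (LipschitzWith.uniformEquicontinuous _ 1 fun N ↦
      lipschitzWith_one_integral_comp (initialMeasure N) (x := x) .of_discrete).equicontinuous
      |>.isClosed_setOfPred_tendsto (lipschitzWith_one_integral_comp μ measurable_id).continuous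
  refine fun f ↦ closure_minimal (fun f hf ↦ ?_) hclosed (hS f)
  induction hf using Submodule.span_induction with
  | mem f hf => exact h f hf
  | zero => simp
  | add f g _ _ hf hg =>
    simpa [integral_add (hμ f) (hμ g), integral_add (hN _ f) (hN _ g)] using hf.add hg
  | smul a f _ hf => simpa [integral_const_mul] using hf.const_mul a

end Equidistribution

section Walsh

/-- The nontrivial real character of `ℤ/2ℤ`, `a ↦ (-1)^a`. -/
noncomputable def signChar : AddChar (ZMod 2) ℝ := AddChar.zmodChar 2 (ζ := -1) (by norm_num)

lemma signChar_one : signChar 1 = -1 := by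
  rw [signChar, show (1 : ZMod 2) = ((1 : ℕ) : ZMod 2) by rfl, AddChar.zmodChar_apply', pow_one]

lemma signChar_injective : Function.Injective signChar := by
  have h01 : signChar 0 ≠ signChar 1 := by
    rw [AddChar.map_zero_eq_one, signChar_one]
    norm_num
  intro a b h
  fin_cases a <;> fin_cases b
  exacts [rfl, (h01 h).elim, (h01 h.symm).elim, rfl]

lemma abs_signChar (a : ZMod 2) : |signChar a| = 1 :=
  AddChar.norm_apply signChar a

/-- The linear form `c ↦ ∑ⱼ nⱼ c j`, where `nⱼ ∈ {0, 1}` are the binary digits of `n`. -/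
def binaryPairing (n : ℕ) : (ℕ → ZMod 2) →ₗ[ZMod 2] ZMod 2 where
  toFun c := (n.bitIndices.map c).sum
  map_add' _ _ := List.sum_map_add
  map_smul' _ _ := List.sum_map_mul_left ..

lemma binaryPairing_two_mul (n : ℕ) (c : ℕ → ZMod 2) :
    binaryPairing (2 * n) c = binaryPairing n fun j ↦ c (j + 1) := by
  simp [binaryPairing, Function.comp_def]

lemma binaryPairing_two_mul_add_one (n : ℕ) (c : ℕ → ZMod 2) :
    binaryPairing (2 * n + 1) c = c 0 + binaryPairing n fun j ↦ c (j + 1) := by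
  simp [binaryPairing, Function.comp_def]

/-- The sum of the first `N` values of the Walsh function with frequency `c`. -/
noncomputable def walshSum (c : ℕ → ZMod 2) (N : ℕ) : ℝ :=
  ∑ n ∈ Finset.range N, signChar (binaryPairing n c)

lemma walshSum_two_mul (c : ℕ → ZMod 2) (N : ℕ) :
    walshSum c (2 * N) = (1 + signChar (c 0)) * walshSum (fun j ↦ c (j + 1)) N := by
  induction N with
  | zero => simp [walshSum]
  | succ N ih =>
    rw [walshSum] at ih ⊢
    rw [mul_add_one, Finset.sum_range_succ, Finset.sum_range_succ, ih, binaryPairing_two_mul,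
      binaryPairing_two_mul_add_one, AddChar.map_add_eq_mul, walshSum, walshSum,
      Finset.sum_range_succ]
    ring

lemma abs_walshSum_le_mul_half (c : ℕ → ZMod 2) (N : ℕ) :
    |walshSum c N| ≤ |1 + signChar (c 0)| * |walshSum (fun j ↦ c (j + 1)) (N / 2)| + 1 := by
  rw [← abs_mul, ← walshSum_two_mul]
  rcases N.even_or_odd' with ⟨k, rfl | rfl⟩
  · simp
  · rw [show (2 * k + 1) / 2 = k by omega, walshSum, Finset.sum_range_succ,
      ← abs_signChar (binaryPairing (2 * k) c)]
    exact abs_add_le ..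

lemma abs_walshSum_le {j : ℕ} {c : ℕ → ZMod 2} (hc : c j ≠ 0) (N : ℕ) :
    |walshSum c N| ≤ 2 ^ (j + 1) - 1 := by
  refine (abs_walshSum_le_mul_half c N).trans ?_
  induction j generalizing c N with
  | zero =>
    have hc1 : c 0 = 1 := Fin.eq_one_of_ne_zero _ hc
    rw [hc1, signChar_one]
    norm_num
  | succ j ih =>
    have htail : |walshSum (fun j ↦ c (j + 1)) (N / 2)| ≤ 2 ^ (j + 1) - 1 :=
      (abs_walshSum_le_mul_half ..).trans (ih (c := fun j ↦ c (j + 1)) hc (N / 2))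
    have hfactor : |1 + signChar (c 0)| ≤ 2 := by
      calc |1 + signChar (c 0)| ≤ |1| + |signChar (c 0)| := abs_add_le ..
        _ = 2 := by rw [abs_signChar, abs_one, one_add_one_eq_two]
    calc |1 + signChar (c 0)| * |walshSum (fun j ↦ c (j + 1)) (N / 2)| + 1
        ≤ 2 * (2 ^ (j + 1) - 1) + 1 := by gcongr
      _ = 2 ^ (j + 1 + 1) - 1 := by ring

lemma tendsto_integral_walsh {c : ℕ → ZMod 2} (hc : c ≠ 0) :
    Tendsto (fun N ↦ ∫ n, signChar (binaryPairing n c) ∂initialMeasure N) atTop (𝓝 0) := by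
  obtain ⟨j, hj⟩ := Function.ne_iff.1 hc
  refine squeeze_zero_norm (fun N ↦ ?_)
    (tendsto_const_div_atTop_nhds_zero_nat (2 ^ (j + 1) - 1 : ℝ))
  rw [integral_initialMeasure, norm_div, Real.norm_natCast]
  gcongr
  exact abs_walshSum_le hj N

end Walsh

section CubeCharacter

lemma integral_addChar_eq_zero {G 𝕜 : Type*} [AddGroup G] [MeasurableSpace G] [MeasurableAdd G]
    [RCLike 𝕜] (μ : Measure G) [μ.IsAddLeftInvariant] {ψ : AddChar G 𝕜} (hψ : ψ ≠ 1) :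
    ∫ g, ψ g ∂μ = 0 := by
  obtain ⟨a, ha⟩ := AddChar.ne_one_iff.1 hψ
  have h := integral_add_left_eq_self (μ := μ) (fun g ↦ ψ g) a
  simp only [AddChar.map_add_eq_mul, integral_const_mul] at h
  by_contra h0
  exact ha ((mul_eq_right₀ h0).1 h)

variable {ι : Type*}

/-- The character `x ↦ (-1)^(∑ᵢ aᵢ xᵢ)` of `(ℤ/2ℤ)^ι`. -/
noncomputable def cubeAddChar (a : ι →₀ ZMod 2) : AddChar (ι → ZMod 2) ℝ where
  toFun x := signChar (Finsupp.linearCombination (ZMod 2) x a)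
  map_zero_eq_one' := by simp
  map_add_eq_mul' x y := by
    rw [← AddChar.map_add_eq_mul]
    simp [Finsupp.linearCombination_apply, Finsupp.sum, mul_add, Finset.sum_add_distrib]

lemma cubeAddChar_single (i : ι) (x : ι → ZMod 2) :
    cubeAddChar (Finsupp.single i 1) x = signChar (x i) := by
  simp [cubeAddChar]

lemma cubeAddChar_ne_one {a : ι →₀ ZMod 2} (ha : a ≠ 0) : cubeAddChar a ≠ 1 := by
  classical
  obtain ⟨i, hi⟩ := Finsupp.ne_iff.1 ha
  have hi1 : a i = 1 := Fin.eq_one_of_ne_zero _ hi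
  refine AddChar.ne_one_iff.2 ⟨Pi.single i 1, ?_⟩
  have hsingle : cubeAddChar a (Pi.single i 1) = -1 := by
    simp [cubeAddChar, Finsupp.linearCombination_apply, Pi.single_apply, hi1, signChar_one]
  rw [hsingle]
  norm_num

/-- The characters of `(ℤ/2ℤ)^ι` as a group of continuous functions. -/
noncomputable def cubeChar : Multiplicative (ι →₀ ZMod 2) →* C(ι → ZMod 2, ℝ) where
  toFun a := ⟨cubeAddChar a.toAdd, by
    refine continuous_of_discreteTopology (f := signChar).comp ?_
    exact continuous_finsetSum _ fun i _ ↦ by fun_prop⟩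
  map_one' := by ext; simp [cubeAddChar]
  map_mul' a b := by ext; simp [cubeAddChar, AddChar.map_add_eq_mul]

lemma dense_span_range_cubeChar :
    Dense (Submodule.span ℝ (Set.range (cubeChar (ι := ι))) : Set C(ι → ZMod 2, ℝ)) := by
  have hspan : Submodule.span ℝ (Set.range (cubeChar (ι := ι))) =
      Subalgebra.toSubmodule (Algebra.adjoin ℝ (Set.range (cubeChar (ι := ι)))) := by
    rw [Algebra.adjoin_eq_span, ← MonoidHom.coe_mrange, Submonoid.closure_eq]
  have hsep : (Algebra.adjoin ℝ (Set.range (cubeChar (ι := ι)))).SeparatesPoints := by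
    intro x y hxy
    obtain ⟨i, hi⟩ := Function.ne_iff.1 hxy
    refine ⟨_, ⟨cubeChar (.ofAdd (Finsupp.single i 1)), Algebra.subset_adjoin ⟨_, rfl⟩, rfl⟩, ?_⟩
    simpa [cubeChar, cubeAddChar_single] using signChar_injective.ne hi
  have hdense := ContinuousMap.subalgebra_topologicalClosure_eq_top_of_separatesPoints _ hsep
  rw [hspan, Subalgebra.coe_toSubmodule, dense_iff_closure_eq,
    ← Subalgebra.topologicalClosure_coe, hdense, Algebra.coe_top]

lemma exists_linearIndependent_of_mk_le_continuum (hι : Cardinal.mk ι ≤ Cardinal.continuum) :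
    ∃ c : ι → ℕ → ZMod 2, LinearIndependent (ZMod 2) c := by
  let b := Module.Basis.ofVectorSpace (ZMod 2) (ℕ → ZMod 2)
  have hb : Cardinal.mk (Module.Basis.ofVectorSpaceIndex (ZMod 2) (ℕ → ZMod 2)) =
      Cardinal.continuum := by
    rw [b.mk_eq_rank'', rank_fun_infinite]
    simp
  obtain ⟨e⟩ : Nonempty (ι ↪ Module.Basis.ofVectorSpaceIndex (ZMod 2) (ℕ → ZMod 2)) :=
    Cardinal.lift_mk_le'.1 (by simpa [hb] using hι)
  exact ⟨_, b.linearIndependent.comp e e.injective⟩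

lemma exists_equidistributed_of_mk_le_continuum (hι : Cardinal.mk ι ≤ Cardinal.continuum)
    [MeasurableSpace (ι → ZMod 2)] [BorelSpace (ι → ZMod 2)] (μ : Measure (ι → ZMod 2))
    [μ.IsAddHaarMeasure] [IsProbabilityMeasure μ] : ∃ x : ℕ → ι → ZMod 2, Equidistributed μ x := by
  obtain ⟨c, hc⟩ := exists_linearIndependent_of_mk_le_continuum hι
  refine ⟨fun n i ↦ binaryPairing n (c i),
    equidistributed_of_dense_span dense_span_range_cubeChar ?_⟩
  rintro _ ⟨a, rfl⟩
  have hxa (n : ℕ) : cubeChar a (fun i ↦ binaryPairing n (c i)) =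
      signChar (binaryPairing n (Finsupp.linearCombination (ZMod 2) c a.toAdd)) := by
    rw [Finsupp.apply_linearCombination]
    rfl
  rcases eq_or_ne a 1 with rfl | ha
  · refine tendsto_const_nhds.congr' ?_
    filter_upwards [eventually_ne_atTop 0] with N hN
    have : IsProbabilityMeasure (initialMeasure N) :=
      isProbabilityMeasure_uniformOn (Finset.finite_toSet _) (by simpa using hN)
    simp
  · have hc0 : Finsupp.linearCombination (ZMod 2) c a.toAdd ≠ 0 :=
      (map_ne_zero_iff _ hc).2 ha
    simp only [hxa]
    rw [show ∫ y, cubeChar a y ∂μ = 0 from integral_addChar_eq_zero μ (cubeAddChar_ne_one ha)]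
    exact tendsto_integral_walsh hc0

end CubeCharacter

theorem haar_algebra_embeds_into_density_quotient_general {ι : Type*}
    (hι : Cardinal.mk ι ≤ Cardinal.continuum) [MeasurableSpace (ι → ZMod 2)]
    [BorelSpace (ι → ZMod 2)] (μ : Measure (ι → ZMod 2)) [μ.IsAddHaarMeasure]
    [IsProbabilityMeasure μ] :
    ∃ Φ : Set (ι → ZMod 2) → Set ℕ,
      (∀ A : Set (ι → ZMod 2), NullMeasurableSet A μ → HasDensity (Φ A) (μ A).toReal) ∧
      (∀ A B : Set (ι → ZMod 2), NullMeasurableSet A μ → NullMeasurableSet B μ →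
        HasDensity (Φ (A ∩ B) ∆ (Φ A ∩ Φ B)) 0 ∧
        HasDensity (Φ (A ∪ B) ∆ (Φ A ∪ Φ B)) 0) ∧
      (∀ A : Set (ι → ZMod 2), NullMeasurableSet A μ →
        HasDensity (Φ Aᶜ ∆ (Φ A)ᶜ) 0) ∧
      (∀ A B : Set (ι → ZMod 2), NullMeasurableSet A μ → NullMeasurableSet B μ →
        0 < μ (A ∆ B) → 0 < upperDensity (Φ A ∆ Φ B)) := by
  obtain ⟨x, hx⟩ := exists_equidistributed_of_mk_le_continuum hι μ
  have halg : IsSetAlgebra {C : Set (ι → ZMod 2) | IsClopen C} := isSetAlgebra_isClopen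
  have hnull (C) (hC : IsClopen C) : NullMeasurableSet C μ :=
    hC.isOpen.measurableSet.nullMeasurableSet
  have hdens (C) (hC : IsClopen C) : HasDensity (x ⁻¹' C) (μ.real C) :=
    hx.hasDensity_preimage hC
  have hex (A) (hA : NullMeasurableSet A μ) :
      ∃ E, IsAlmostPreimage μ {C | IsClopen C} x A E :=
    exists_isAlmostPreimage halg (measureDense_isClopen μ) hdens hA
  choose! Φ hΦ using hex
  refine ⟨Φ, fun A hA ↦ (hΦ A hA).hasDensity hnull hdens hA, fun A B hA hB ↦ ⟨?_, ?_⟩,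
    fun A hA ↦ ?_, fun A B hA hB hAB ↦ ?_⟩
  · exact (hΦ _ (hA.inter hB)).hasDensity_symmDiff halg hnull hdens
      ((hΦ A hA).inter halg (hΦ B hB))
  · exact (hΦ _ (hA.union hB)).hasDensity_symmDiff halg hnull hdens
      ((hΦ A hA).union halg (hΦ B hB))
  · exact (hΦ _ hA.compl).hasDensity_symmDiff halg hnull hdens ((hΦ A hA).compl halg)
  · have h := ((hΦ A hA).symmDiff halg (hΦ B hB)).hasDensity hnull hdens (hA.symmDiff hB)
    rw [h.upperDensity_eq]
    exact ENNReal.toReal_pos hAB.ne' (measure_ne_top _ _)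

/-- Theorem 3: the measure algebra `H(2^𝔠)/Δ_H` of Haar-measurable subsets of the Cantor
cube `2^𝔠` modulo Haar-null sets admits a measure-preserving embedding into `𝒫(ℕ)/Δ_d`:
there is a map `Φ` on Haar-measurable sets such that `d(Φ(a)) = μ(a)`, `Φ` is a Boolean
homomorphism modulo density zero, and `Φ` is injective modulo density zero. -/
theorem haar_algebra_embeds_into_density_quotient
    (μ : Measure CantorCube) [μ.IsAddHaarMeasure] [IsProbabilityMeasure μ] :
    ∃ Φ : Set CantorCube → Set ℕ,
      -- (i) measure-preserving: the density of `Φ A` exists and equals `μ A`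
      (∀ A : Set CantorCube, NullMeasurableSet A μ → HasDensity (Φ A) (μ A).toReal) ∧
      -- (ii) Boolean homomorphism modulo `Δ_d`
      (∀ A B : Set CantorCube, NullMeasurableSet A μ → NullMeasurableSet B μ →
        HasDensity (Φ (A ∩ B) ∆ (Φ A ∩ Φ B)) 0 ∧
        HasDensity (Φ (A ∪ B) ∆ (Φ A ∪ Φ B)) 0) ∧
      (∀ A : Set CantorCube, NullMeasurableSet A μ →
        HasDensity (Φ Aᶜ ∆ (Φ A)ᶜ) 0) ∧
      -- (iii) injective modulo `Δ_d`
      (∀ A B : Set CantorCube, NullMeasurableSet A μ → NullMeasurableSet B μ →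
        0 < μ (A ∆ B) → 0 < upperDensity (Φ A ∆ Φ B)) := by
  exact haar_algebra_embeds_into_density_quotient_general (by simp [Cardinal.mk_set]) μ
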